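/- For every λ > 0 and every θ ∈ ℝ, at least one of the following holds: for all odd k ≥ 1 and all E ∈ ℝ, (∂/∂E) x_k(E, λ, θ) = (∂/∂E) x_k(E, λ, 0), or for all even k ≥ 0 and all E ∈ ℝ, (∂/∂E) x_k(E, λ, θ) = (∂/∂E) x_k(E, λ, 0). -/

import Mathlib

/-- `ω = (√5 - 1)/2`, the inverse of the golden mean. -/
noncomputable def goldenOmega : ℝ := (Real.sqrt 5 - 1) / 2

/-- The Fibonacci potential: `v_θ(n) = 1` if the fractional part of `nω + θ`
lies in `[1 - ω, 1)`, and `0` otherwise. -/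
noncomputable def vTheta (θ : ℝ) (n : ℤ) : ℝ :=
  if Int.fract ((n : ℝ) * goldenOmega + θ) ∈ Set.Ico (1 - goldenOmega) 1 then 1 else 0

/-- The one-step transfer matrix `T(m, E, λ, θ)` with rows
`(E - λ v_θ(m), -1)` and `(1, 0)`. -/
noncomputable def Tmat (lam θ E : ℝ) (m : ℤ) : Matrix (Fin 2) (Fin 2) ℝ :=
  !![E - lam * vTheta θ m, -1; 1, 0]

/-- The transfer matrix over `[1, n]`:
`M(n, E, λ, θ) = T(n, E, λ, θ) ⋯ T(1, E, λ, θ)` (with `M(0) = 1`). -/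
noncomputable def Mmat (lam θ E : ℝ) : ℕ → Matrix (Fin 2) (Fin 2) ℝ
  | 0 => 1
  | n + 1 => Tmat lam θ E ((n : ℤ) + 1) * Mmat lam θ E n

/-- The trace `x_k(E, λ, θ) = tr M(F_k, E, λ, θ)`, where `F_k = Nat.fib (k + 2)`
(the paper's Fibonacci numbers `F_{-1} = F_0 = 1`, `F_k = F_{k-1} + F_{k-2}`). -/
noncomputable def xTrace (lam θ : ℝ) (k : ℕ) (E : ℝ) : ℝ :=
  Matrix.trace (Mmat lam θ E (Nat.fib (k + 2)))

/-!
The value `v_θ(n + 1)` is the `n`-th letter of the mechanical word of slope `ω` and intercept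
`θ + ω`. Put `p / q = F_{k-1} / F_k`, so that `q ω - p = ± ω ^ (k + 2)` and `q |q ω - p| < 1`.
Then the first `q` letters are those of a word of slope `p / q` and intercept in `(1 / q) ℤ`,
provided that `⌊n ω + θ + ω⌋` increases by exactly `p` as `n` runs from `0` to `q`. All words of
slope `p / q` with such intercepts have the same period up to rotation, and the trace of a product
is invariant under rotation of the factors, so `x_k(E, λ, θ)` does not depend on `θ` as long as the
proviso holds. The sign of `q ω - p` alternates with `k`, so the proviso can fail for one parity of
`k` only, depending on the fractional part of `θ + ω`; for `θ = 0` it holds for all `k`.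
-/

open Function
open scoped List goldenRatio

section MechanicalWord

variable {R : Type*} [CommRing R] [LinearOrder R] [FloorRing R]

/-- The lower mechanical word of slope `α` and intercept `ρ`, indexed from `0`. For `0 ≤ α ≤ 1` its
letters are `0` and `1`, and it is the coding of the rotation by `α` started at `ρ`. -/
def mechanicalWord (α ρ : R) (n : ℕ) : ℤ :=
  ⌊(n + 1) * α + ρ⌋ - ⌊n * α + ρ⌋

/-- The first `q` letters of the mechanical word of slope `α` and intercept `ρ`. -/
def mechanicalPrefix (α ρ : R) (q : ℕ) : List ℤ :=
  (List.range q).map (mechanicalWord α ρ)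

/-- The first `q` letters of the mechanical word of slope `α` and intercept `ρ`, up to rotation,
which is all that the trace of the corresponding product of transfer matrices depends on. -/
def mechanicalCycle (α ρ : R) (q : ℕ) : Cycle ℤ :=
  mechanicalPrefix α ρ q

lemma mechanicalWord_add_slope (α ρ : R) (n : ℕ) :
    mechanicalWord α (ρ + α) n = mechanicalWord α ρ (n + 1) := by
  simp only [mechanicalWord]
  push_cast
  congr 2 <;> ring

lemma mechanicalCycle_add_slope {α ρ : R} {q : ℕ}
    (h : mechanicalWord α ρ q = mechanicalWord α ρ 0) :
    mechanicalCycle α (ρ + α) q = mechanicalCycle α ρ q := by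
  cases q with
  | zero => rfl
  | succ n =>
    have hrotate : (mechanicalPrefix α ρ (n + 1)).rotate 1 = mechanicalPrefix α (ρ + α) (n + 1) :=
      calc
        (mechanicalPrefix α ρ (n + 1)).rotate 1
            = (List.range n).map (mechanicalWord α ρ ∘ Nat.succ) ++ [mechanicalWord α ρ 0] := by
          simp [mechanicalPrefix, List.range_succ_eq_map]
        _ = mechanicalPrefix α (ρ + α) (n + 1) := by
          simp [mechanicalPrefix, List.range_succ, mechanicalWord_add_slope, h]
    exact (Cycle.coe_eq_coe.2 ⟨1, hrotate⟩).symm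

variable [IsStrictOrderedRing R]

lemma mechanicalWord_eq_ite {α : R} (hα₀ : 0 ≤ α) (hα₁ : α ≤ 1) (ρ : R) (n : ℕ) :
    mechanicalWord α ρ n = if 1 - α ≤ Int.fract (n * α + ρ) then 1 else 0 := by
  have hfloor := Int.floor_add_fract (n * α + ρ)
  have hnonneg := Int.fract_nonneg (n * α + ρ)
  have hlt := Int.fract_lt_one (n * α + ρ)
  rw [mechanicalWord, sub_eq_iff_eq_add, Int.floor_eq_iff]
  split_ifs <;> push_cast <;> constructor <;> linarith

lemma periodic_mechanicalWord_intercept (α : R) : Periodic (mechanicalWord α) 1 := by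
  intro ρ
  funext n
  simp only [mechanicalWord, ← add_assoc, Int.floor_add_one]
  ring

variable {K : Type*} [Field K] [LinearOrder K] [IsStrictOrderedRing K] [FloorRing K]

lemma periodic_mechanicalWord_div (p : ℤ) {q : ℕ} (hq : 0 < q) (ρ : K) :
    Periodic (mechanicalWord (p / q : K) ρ) q := by
  have hq' : (q : K) ≠ 0 := by positivity
  intro n
  have hshift (x : K) : (x + q) * (p / q) + ρ = x * (p / q) + ρ + p := by field_simp; ring
  simp only [mechanicalWord, Nat.cast_add, add_right_comm _ (q : K) 1, hshift,
    Int.floor_add_intCast]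
  ring

lemma periodic_mechanicalCycle_div {p : ℤ} {q : ℕ} (hq : 0 < q) (hpq : IsCoprime p q) :
    Periodic (fun ρ : K ↦ mechanicalCycle (p / q : K) ρ q) (1 / q) := by
  have hslope : Periodic (fun ρ : K ↦ mechanicalCycle (p / q : K) ρ q) (p / q) := fun ρ ↦
    mechanicalCycle_add_slope (periodic_mechanicalWord_div p hq ρ).eq
  have hone : Periodic (fun ρ : K ↦ mechanicalCycle (p / q : K) ρ q) 1 :=
    (periodic_mechanicalWord_intercept (p / q : K)).comp fun w ↦ ((List.range q).map w : Cycle ℤ)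
  obtain ⟨a, b, hab⟩ := hpq
  have hbezout : (1 / q : K) = a * (p / q) + b * 1 := by
    have hq' : (q : K) ≠ 0 := by positivity
    have hab' : (a * p + b * q : K) = 1 := mod_cast hab
    field_simp
    linarith
  rw [hbezout]
  exact (hslope.int_mul a).add_period (hone.int_mul b)

lemma mechanicalCycle_div_intCast_div {p : ℤ} {q : ℕ} (hq : 0 < q) (hpq : IsCoprime p q)
    (j : ℤ) :
    mechanicalCycle (p / q : K) (j / q) q = mechanicalCycle (p / q : K) 0 q := by
  simpa only [mul_one_div] using (periodic_mechanicalCycle_div (K := K) hq hpq).int_mul_eq j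

end MechanicalWord

section RationalApproximation

variable {R : Type*} [CommRing R] [LinearOrder R] [FloorRing R]

/-- `q` times the height of the lattice point `(n, ⌊n α + ρ⌋)` above the line of slope `p / q`
through the origin. If these heights vary by less than `1` for `0 ≤ n ≤ q`, then `⌊n α + ρ⌋` is
given by a line of slope `p / q` on this range. -/
def floorDefect (α ρ : R) (p : ℤ) (q n : ℕ) : ℤ :=
  ⌊n * α + ρ⌋ * q - n * p

variable {p : ℤ} {q m n : ℕ} {α ρ : R}

lemma modEq_of_floorDefect_modEq (hpq : IsCoprime p q)
    (h : floorDefect α ρ p q n ≡ floorDefect α ρ p q m [ZMOD q]) : n ≡ m [MOD q] := by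
  have hdiff : (m - n : ℤ) * p =
      (⌊m * α + ρ⌋ - ⌊n * α + ρ⌋) * q - (floorDefect α ρ p q m - floorDefect α ρ p q n) := by
    simp only [floorDefect]
    ring
  have hdvd : (q : ℤ) ∣ (m - n) * p := hdiff ▸ (dvd_mul_left _ _).sub h.dvd
  exact Int.natCast_modEq_iff.1 (Int.modEq_iff_dvd.2 (hpq.symm.dvd_of_dvd_mul_right hdvd))

lemma floorDefect_eq_of_modEq (hcarry : ⌊q * α + ρ⌋ = ⌊ρ⌋ + p) (hm : m ≤ q) (hn : n ≤ q)
    (h : n ≡ m [MOD q]) : floorDefect α ρ p q n = floorDefect α ρ p q m := by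
  have hends : floorDefect α ρ p q q = floorDefect α ρ p q 0 := by
    simp only [floorDefect, hcarry, Nat.cast_zero, zero_mul, zero_add]
    ring
  have hmod {n : ℕ} (hn : n ≤ q) : floorDefect α ρ p q n = floorDefect α ρ p q (n % q) := by
    obtain hlt | rfl := hn.lt_or_eq
    · rw [Nat.mod_eq_of_lt hlt]
    · rw [Nat.mod_self, hends]
  rw [hmod hn, hmod hm, h]

variable [IsStrictOrderedRing R]

lemma floorDefect_le_add (hα : q * |q * α - p| < 1) (hm : m ≤ q) (hn : n ≤ q) :
    floorDefect α ρ p q n ≤ floorDefect α ρ p q m + q := by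
  have hdist : |(n - m : R)| ≤ q := by
    have hm' : (m : R) ≤ q := mod_cast hm
    have hn' : (n : R) ≤ q := mod_cast hn
    rw [abs_le]
    constructor <;> linarith [m.cast_nonneg (α := R), n.cast_nonneg (α := R)]
  have hdrift : (n - m) * (q * α - p) < 1 := calc
    (n - m) * (q * α - p) ≤ |(n - m : R)| * |q * α - p| := by rw [← abs_mul]; exact le_abs_self _
    _ ≤ q * |q * α - p| := by gcongr
    _ < 1 := hα
  have hfloor : ((⌊n * α + ρ⌋ : R) - ⌊m * α + ρ⌋ - 1) * q ≤ (n - m) * α * q := by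
    gcongr
    linarith [Int.floor_le (n * α + ρ), Int.lt_floor_add_one (m * α + ρ)]
  have hlt : (floorDefect α ρ p q n : R) < floorDefect α ρ p q m + q + 1 := by
    simp only [floorDefect]
    push_cast
    linarith
  exact Int.lt_add_one_iff.1 (mod_cast hlt)

lemma floorDefect_lt_add (hq : 0 < q) (hpq : IsCoprime p q) (hα : q * |q * α - p| < 1)
    (hcarry : ⌊q * α + ρ⌋ = ⌊ρ⌋ + p) (hm : m ≤ q) (hn : n ≤ q) :
    floorDefect α ρ p q n < floorDefect α ρ p q m + q := by
  refine (floorDefect_le_add hα hm hn).lt_of_ne fun heq ↦ ?_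
  have hmod : n ≡ m [MOD q] :=
    modEq_of_floorDefect_modEq hpq (heq ▸ Int.add_modEq_right)
  have := floorDefect_eq_of_modEq hcarry hm hn hmod
  omega

variable {K : Type*} [Field K] [LinearOrder K] [IsStrictOrderedRing K] [FloorRing K] {α ρ : K}

lemma exists_forall_floor_eq_floor_div (hq : 0 < q) (hpq : IsCoprime p q)
    (hα : q * |q * α - p| < 1) (hcarry : ⌊q * α + ρ⌋ = ⌊ρ⌋ + p) :
    ∃ j : ℤ, ∀ n : ℕ, n ≤ q → ⌊n * α + ρ⌋ = ⌊n * (p / q : K) + j / q⌋ := by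
  obtain ⟨m, hm, hmax⟩ := (Finset.range (q + 1)).exists_max_image (floorDefect α ρ p q) (by simp)
  simp only [Finset.mem_range_succ_iff] at hm hmax
  refine ⟨floorDefect α ρ p q m, fun n hn ↦ ?_⟩
  have hle := hmax n hn
  have hlt := floorDefect_lt_add hq hpq hα hcarry hn hm
  have hline : (n * (p / q) + floorDefect α ρ p q m / q : K)
      = ((n * p + floorDefect α ρ p q m : ℤ) : K) / q := by push_cast; ring
  rw [hline, Int.floor_div_natCast, Int.floor_intCast, eq_comm,
    Int.ediv_eq_iff_of_pos (mod_cast hq)]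
  nth_rw 1 [floorDefect] at hle
  nth_rw 2 [floorDefect] at hlt
  constructor <;> linarith

theorem mechanicalCycle_eq_mechanicalCycle_div (hq : 0 < q) (hpq : IsCoprime p q)
    (hα : q * |q * α - p| < 1) (hcarry : ⌊q * α + ρ⌋ = ⌊ρ⌋ + p) :
    mechanicalCycle α ρ q = mechanicalCycle (p / q : K) 0 q := by
  obtain ⟨j, hj⟩ := exists_forall_floor_eq_floor_div hq hpq hα hcarry
  have hprefix : mechanicalPrefix α ρ q = mechanicalPrefix (p / q : K) (j / q) q := by
    refine List.map_congr_left fun n hn ↦ ?_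
    have hn' : n < q := List.mem_range.1 hn
    have hsucc := hj (n + 1) hn'
    push_cast at hsucc
    rw [mechanicalWord, mechanicalWord, hsucc, hj n hn'.le]
  rw [mechanicalCycle, hprefix]
  exact mechanicalCycle_div_intCast_div hq hpq j

end RationalApproximation

section GoldenOmega

lemma goldenOmega_eq_neg_goldenConj : goldenOmega = -ψ := by
  rw [goldenOmega, Real.goldenConj]
  ring

lemma goldenOmega_pos : 0 < goldenOmega := by
  linarith [goldenOmega_eq_neg_goldenConj, Real.goldenConj_neg]

lemma goldenOmega_lt_one : goldenOmega < 1 := by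
  linarith [goldenOmega_eq_neg_goldenConj, Real.neg_one_lt_goldenConj]

lemma goldenOmega_sq : goldenOmega ^ 2 = 1 - goldenOmega := by
  rw [goldenOmega_eq_neg_goldenConj, neg_sq, Real.goldenConj_sq]
  ring

lemma goldenOmega_pow_le_sq (k : ℕ) : goldenOmega ^ (k + 2) ≤ goldenOmega ^ 2 :=
  pow_le_pow_of_le_one goldenOmega_pos.le goldenOmega_lt_one.le (by omega)

lemma fib_succ_mul_goldenOmega_sub_fib (n : ℕ) :
    Nat.fib (n + 1) * goldenOmega - Nat.fib n = -(-goldenOmega) ^ (n + 1) := by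
  rw [goldenOmega_eq_neg_goldenConj, neg_neg, ← Real.goldenConj_mul_fib_succ_add_fib]
  ring

lemma fib_succ_lt_goldenRatio_pow (n : ℕ) : (Nat.fib (n + 1) : ℝ) < φ ^ (n + 1) := by
  have hpos : (0 : ℝ) < Nat.fib (n + 1) := mod_cast Nat.fib_pos.2 n.succ_pos
  calc
    (Nat.fib (n + 1) : ℝ) < φ * Nat.fib (n + 1) :=
      lt_mul_of_one_lt_left hpos Real.one_lt_goldenRatio
    _ ≤ φ * Nat.fib (n + 1) + Nat.fib n := le_add_of_nonneg_right (Nat.cast_nonneg _)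
    _ = φ ^ (n + 1) := Real.goldenRatio_mul_fib_succ_add_fib n

lemma fib_succ_mul_abs_goldenOmega_sub_fib_lt_one (n : ℕ) :
    Nat.fib (n + 1) * |Nat.fib (n + 1) * goldenOmega - Nat.fib n| < 1 := by
  have hinv : φ * goldenOmega = 1 := by
    rw [goldenOmega_eq_neg_goldenConj, mul_neg, Real.goldenRatio_mul_goldenConj, neg_neg]
  have hpow : 0 < goldenOmega ^ (n + 1) := pow_pos goldenOmega_pos _
  calc
    Nat.fib (n + 1) * |Nat.fib (n + 1) * goldenOmega - Nat.fib n|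
        = Nat.fib (n + 1) * goldenOmega ^ (n + 1) := by
      rw [fib_succ_mul_goldenOmega_sub_fib, abs_neg, abs_pow, abs_neg, abs_of_pos goldenOmega_pos]
    _ < φ ^ (n + 1) * goldenOmega ^ (n + 1) := by gcongr; exact fib_succ_lt_goldenRatio_pow n
    _ = 1 := by rw [← mul_pow, hinv, one_pow]

lemma floor_fib_succ_mul_add_iff (n : ℕ) (ρ : ℝ) :
    ⌊Nat.fib (n + 1) * goldenOmega + ρ⌋ = ⌊ρ⌋ + Nat.fib n ↔
      Int.fract ρ - (-goldenOmega) ^ (n + 1) ∈ Set.Ico 0 1 := by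
  have hfloor := Int.floor_add_fract ρ
  have hfib := fib_succ_mul_goldenOmega_sub_fib n
  rw [Int.floor_eq_iff, Set.mem_Ico]
  push_cast
  constructor <;> rintro ⟨h₀, h₁⟩ <;> constructor <;> linarith

lemma floor_fib_succ_mul_add_of_odd {n : ℕ} (hn : Odd n) {ρ : ℝ}
    (hρ : goldenOmega ^ (n + 1) ≤ Int.fract ρ) :
    ⌊Nat.fib (n + 1) * goldenOmega + ρ⌋ = ⌊ρ⌋ + Nat.fib n := by
  have hpow : 0 < goldenOmega ^ (n + 1) := pow_pos goldenOmega_pos _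
  rw [floor_fib_succ_mul_add_iff, hn.add_one.neg_pow]
  constructor <;> linarith [Int.fract_lt_one ρ]

lemma floor_fib_succ_mul_add_of_even {n : ℕ} (hn : Even n) {ρ : ℝ}
    (hρ : Int.fract ρ + goldenOmega ^ (n + 1) < 1) :
    ⌊Nat.fib (n + 1) * goldenOmega + ρ⌋ = ⌊ρ⌋ + Nat.fib n := by
  have hpow : 0 < goldenOmega ^ (n + 1) := pow_pos goldenOmega_pos _
  rw [floor_fib_succ_mul_add_iff, hn.add_one.neg_pow]
  constructor <;> linarith [Int.fract_nonneg ρ]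

lemma floor_fib_mul_goldenOmega_add_goldenOmega (k : ℕ) :
    ⌊Nat.fib (k + 2) * goldenOmega + goldenOmega⌋ = ⌊goldenOmega⌋ + Nat.fib (k + 1) := by
  have hfract : Int.fract goldenOmega = goldenOmega :=
    Int.fract_eq_self.2 ⟨goldenOmega_pos.le, goldenOmega_lt_one⟩
  obtain hk | hk := k.even_or_odd
  · apply floor_fib_succ_mul_add_of_odd hk.add_one
    rw [hfract]
    exact pow_le_of_le_one goldenOmega_pos.le goldenOmega_lt_one.le (by omega)
  · apply floor_fib_succ_mul_add_of_even hk.add_one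
    have hlt : goldenOmega ^ (k + 2) < goldenOmega ^ 2 :=
      pow_lt_pow_right_of_lt_one₀ goldenOmega_pos goldenOmega_lt_one (by have := hk.pos; omega)
    linarith [goldenOmega_sq]

end GoldenOmega

section TransferMatrix

lemma trace_prod_eq_of_isRotated {ι R : Type*} [Fintype ι] [DecidableEq ι] [CommSemiring R]
    {l l' : List (Matrix ι ι R)} (h : l ~r l') : l.prod.trace = l'.prod.trace := by
  obtain ⟨n, rfl⟩ := h
  rw [List.rotate_eq_drop_append_take_mod, List.prod_append, Matrix.trace_mul_comm,
    ← List.prod_append, List.take_append_drop]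

lemma vTheta_succ_eq_mechanicalWord (θ : ℝ) (n : ℕ) :
    vTheta θ (n + 1) = mechanicalWord goldenOmega (θ + goldenOmega) n := by
  have harg : ((n + 1 : ℤ) : ℝ) * goldenOmega + θ = n * goldenOmega + (θ + goldenOmega) := by
    push_cast
    ring
  rw [vTheta, harg, mechanicalWord_eq_ite goldenOmega_pos.le goldenOmega_lt_one.le]
  simp [Int.fract_lt_one]

lemma Mmat_eq_prod_mechanicalPrefix (lam θ E : ℝ) (n : ℕ) :
    Mmat lam θ E n = ((mechanicalPrefix goldenOmega (θ + goldenOmega) n).map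
      fun a : ℤ ↦ !![E - lam * a, -1; 1, 0]).reverse.prod := by
  induction n with
  | zero => rfl
  | succ n ih =>
    rw [Mmat, ih, Tmat, vTheta_succ_eq_mechanicalWord]
    simp [mechanicalPrefix, List.range_succ]

lemma xTrace_eq_of_mechanicalCycle_eq (lam : ℝ) {θ θ' : ℝ} {k : ℕ}
    (h : mechanicalCycle goldenOmega (θ + goldenOmega) (Nat.fib (k + 2))
      = mechanicalCycle goldenOmega (θ' + goldenOmega) (Nat.fib (k + 2))) :
    xTrace lam θ k = xTrace lam θ' k := by
  funext E
  simp only [xTrace, Mmat_eq_prod_mechanicalPrefix]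
  exact trace_prod_eq_of_isRotated ((Cycle.coe_eq_coe.1 h).map _).reverse

theorem xTrace_eq_xTrace_zero_of_floor_eq (lam : ℝ) {θ : ℝ} {k : ℕ}
    (hcarry : ⌊Nat.fib (k + 2) * goldenOmega + (θ + goldenOmega)⌋
      = ⌊θ + goldenOmega⌋ + Nat.fib (k + 1)) :
    xTrace lam θ k = xTrace lam 0 k := by
  have hcycle {ρ : ℝ} (h : ⌊Nat.fib (k + 2) * goldenOmega + ρ⌋ = ⌊ρ⌋ + Nat.fib (k + 1)) :=
    mechanicalCycle_eq_mechanicalCycle_div (Nat.fib_pos.2 (k + 1).succ_pos)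
      (Nat.isCoprime_iff_coprime.2 (Nat.fib_coprime_fib_succ (k + 1)))
      (mod_cast fib_succ_mul_abs_goldenOmega_sub_fib_lt_one (k + 1)) h
  have hzero := hcycle (floor_fib_mul_goldenOmega_add_goldenOmega k)
  exact xTrace_eq_of_mechanicalCycle_eq lam
    ((hcycle hcarry).trans (by rw [zero_add, hzero]))

end TransferMatrix

theorem xTrace_deriv_phase_invariance_general (lam θ : ℝ) :
    (∀ k, Odd k → xTrace lam θ k = xTrace lam 0 k) ∨
      (∀ k, Even k → xTrace lam θ k = xTrace lam 0 k) := by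
  obtain hρ | hρ := lt_or_ge (Int.fract (θ + goldenOmega)) (goldenOmega ^ 2)
  · left
    intro k hk
    have hpow : goldenOmega ^ (k + 2) ≤ goldenOmega :=
      pow_le_of_le_one goldenOmega_pos.le goldenOmega_lt_one.le (by omega)
    exact xTrace_eq_xTrace_zero_of_floor_eq lam
      (floor_fib_succ_mul_add_of_even hk.add_one (by linarith [goldenOmega_sq]))
  · right
    intro k hk
    exact xTrace_eq_xTrace_zero_of_floor_eq lam
      (floor_fib_succ_mul_add_of_odd hk.add_one ((goldenOmega_pow_le_sq k).trans hρ))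

/-- For every `λ > 0` and every `θ`, either for all odd `k ≥ 1` and all `E ∈ ℝ` we have
`(∂/∂E) x_k(E, λ, θ) = (∂/∂E) x_k(E, λ, 0)`, or for all even `k ≥ 0` and all `E ∈ ℝ` we
have `(∂/∂E) x_k(E, λ, θ) = (∂/∂E) x_k(E, λ, 0)`. -/
theorem xTrace_deriv_phase_invariance (lam : ℝ) (hlam : 0 < lam) (θ : ℝ) :
    (∀ k, Odd k → ∀ E : ℝ, deriv (xTrace lam θ k) E = deriv (xTrace lam 0 k) E) ∨
    (∀ k, Even k → ∀ E : ℝ, deriv (xTrace lam θ k) E = deriv (xTrace lam 0 k) E) := by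
  exact (xTrace_deriv_phase_invariance_general lam θ).imp
    (fun h k hk E ↦ by rw [h k hk]) (fun h k hk E ↦ by rw [h k hk])
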